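/- Let f : C([n],k) → R, let f₀ and f₁ denote its restrictions by fixing the last coordinate to 0 and 1 respectively, and let S ∈ H_{n−1, min{k,n−k}}. Then f̂(S) = (1/√(n − 2|S|)) · (√(n − k − |S|) · f̂₀(S) + √(k − |S|) · f̂₁(S)). -/

import Mathlib

/-! Extend all functions by zero to the whole cube `{0,1}^n`, with `up` and `dn` acting slice by
slice, and write `B_n(d) = (P↑)^d χ_{n,S}`, which is the basis vector on the slice of weight
`|S| + d`. Since `n ∉ S`, the restriction of `χ_{n,S}` to last coordinate `0` is `χ_{n-1,S}` and
its restriction to last coordinate `1` is zero. Induction on `d` then gives the two restrictions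
of `B_n(d)`: `B_{n-1}(d)` (`iter_false`) and `d B_{n-1}(d-1)` (`iter_true`). With `d = k - |S|`,
the numerator of `f̂(S)` is therefore the numerator of `f̂₀(S)` plus `k - |S|` times that of
`f̂₁(S)`.

It remains to compare norms. The vector `χ_{n,S}` is killed by the down operator (`dn_chiC`), and
`P↓ P↑ - P↑ P↓ = n - 2k` on the slice of weight `k` (`dn_up`); telescoping gives
`P↓ B_n(d+1) = (d+1)(n - 2|S| - d) B_n(d)` (`dn_iter`), and by adjointness the same factor relates
`‖B_n(d+1)‖²` to `‖B_n(d)‖²` (`nsq_iter`). Applied on the cube of dimension `n - 1` together with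
`‖B_n(d)‖² = ‖B_{n-1}(d)‖² + d² ‖B_{n-1}(d-1)‖²`, this yields for `d = k - |S| ≥ 1`
`‖B_n(d)‖² = (k - |S|)(n - 2|S|) ‖B_{n-1}(d-1)‖²` and
`‖B_{n-1}(d)‖² = (k - |S|)(n - k - |S|) ‖B_{n-1}(d-1)‖²`, which are the required ratios. When
`n - k = |S|` the vector `B_{n-1}(d)` is zero, and when `k = |S|` only the `f₀` term survives. -/

open scoped Classical

/-- The slice `C([n],k)`: vectors in `{0,1}^n` with exactly `k` ones. -/
abbrev Slice (n k : ℕ) :=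
  {x : Fin n → Bool // (Finset.univ.filter fun i => x i = true).card = k}

/-- The up operator `P↑_{n,k}`. -/
noncomputable def upOp (n k : ℕ) : Matrix (Slice n (k + 1)) (Slice n k) ℝ :=
  Matrix.of fun x y => if ∀ i, y.1 i = true → x.1 i = true then (1 : ℝ) else 0

/-- The down operator `P↓_{n,k}` (the transpose of `P↑_{n,k-1}`); it is the zero
matrix for `k = 0`. -/
noncomputable def downOp (n k : ℕ) : Matrix (Slice n (k - 1)) (Slice n k) ℝ :=
  Matrix.of fun x y => if 0 < k ∧ ∀ i, x.1 i = true → y.1 i = true then (1 : ℝ) else 0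

noncomputable def upPathAux (n i : ℕ) : (d : ℕ) → Matrix (Slice n (i + d)) (Slice n i) ℝ
  | 0 => show Matrix (Slice n (i + 0)) (Slice n i) ℝ from (1 : Matrix (Slice n i) (Slice n i) ℝ)
  | d + 1 => upOp n (i + d) * upPathAux n i d

/-- The iterated up operator `P↑_{n,i,k} = P↑_{n,k-1} ⋯ P↑_{n,i}`. -/
noncomputable def upPath (n i k : ℕ) : Matrix (Slice n k) (Slice n i) ℝ :=
  if h : i ≤ k then
    cast (by rw [Nat.add_sub_cancel' h]) (upPathAux n i (k - i))
  else 0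

/-- `P∨_{n,k} = P↑_{n,k-1} P↓_{n,k}`. -/
noncomputable def upDown (n k : ℕ) : Matrix (Slice n k) (Slice n k) ℝ :=
  if h : 1 ≤ k then
    cast (by rw [Nat.sub_add_cancel h]) (upOp n (k - 1) * downOp n k)
  else 0

/-- `P∧_{n,k} = P↓_{n,k+1} P↑_{n,k}`. -/
noncomputable def downUp (n k : ℕ) : Matrix (Slice n k) (Slice n k) ℝ :=
  downOp n (k + 1) * upOp n k

/-- `S ∈ H_{n,k}`: `S ⊆ {1,…,n}`, `|S| ≤ k`, and the `j`-th smallest element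
(1-indexed) is at least `2j`. -/
def IsH (n k : ℕ) (S : Finset ℕ) : Prop :=
  S ⊆ Finset.Icc 1 n ∧ S.card ≤ k ∧
    ∀ j, j < S.card → 2 * (j + 1) ≤ (S.sort (· ≤ ·)).getD j 0

lemma wcast_false {n : ℕ} (x : Fin (n + 1) → Bool) (h : ¬ x (Fin.last n) = true) :
    (Finset.univ.filter fun i : Fin n => x (Fin.castSucc i) = true).card
      = (Finset.univ.filter fun i : Fin (n + 1) => x i = true).card := by
  rw [Finset.card_filter, Finset.card_filter, Fin.sum_univ_castSucc]
  simp [h]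

lemma wcast_true {n : ℕ} (x : Fin (n + 1) → Bool) (h : x (Fin.last n) = true) :
    (Finset.univ.filter fun i : Fin n => x (Fin.castSucc i) = true).card + 1
      = (Finset.univ.filter fun i : Fin (n + 1) => x i = true).card := by
  rw [Finset.card_filter, Finset.card_filter, Fin.sum_univ_castSucc]
  simp [h]

/-- Forgetting the last coordinate of `x` when it equals `0`. -/
def dropLast {n m : ℕ} (x : Slice (n + 1) m) (h : ¬ x.1 (Fin.last n) = true) : Slice n m :=
  ⟨fun i => x.1 (Fin.castSucc i), by
    show (Finset.univ.filter fun i : Fin n => x.1 (Fin.castSucc i) = true).card = m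
    rw [wcast_false x.1 h]; exact x.2⟩

/-- Forgetting the last coordinate of `x` when it equals `1`. -/
def dropLastT {n m : ℕ} (x : Slice (n + 1) m) (h : x.1 (Fin.last n) = true) : Slice n (m - 1) :=
  ⟨fun i => x.1 (Fin.castSucc i), by
    show (Finset.univ.filter fun i : Fin n => x.1 (Fin.castSucc i) = true).card = m - 1
    have h1 := wcast_true x.1 h
    have h2 := x.2
    omega⟩

/-- The vector `χ_{n,S}` on the slice `C([n],|S|)`, defined recursively. -/
noncomputable def chi : (n : ℕ) → (S : Finset ℕ) → Slice n S.card → ℝ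
  | 0, _ => fun _ => 1
  | n + 1, S =>
    if hS : n + 1 ∈ S then
      fun x =>
        if hx : x.1 (Fin.last n) = true then
          chi n (S.erase (n + 1)) ⟨(dropLastT x hx).1, by
            show (Finset.univ.filter fun i : Fin n => x.1 (Fin.castSucc i) = true).card
              = (S.erase (n + 1)).card
            rw [Finset.card_erase_of_mem hS]
            exact (dropLastT x hx).2⟩
        else
          -(∑ y : Slice n (S.erase (n + 1)).card,
              (if ∀ i, y.1 i = true → (dropLast x hx).1 i = true then (1 : ℝ) else 0) *
                chi n (S.erase (n + 1)) y) / ((n : ℝ) + 1 - 2 * S.card + 1)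
    else
      fun x =>
        if hx : x.1 (Fin.last n) = true then 0
        else chi n S (dropLast x hx)

/-- The basis vector `P↑_{n,|S|,k} χ_{n,S}` of `R^{C([n],k)}`. -/
noncomputable def basisVec (n k : ℕ) (S : Finset ℕ) : Slice n k → ℝ :=
  (upPath n S.card k).mulVec (chi n S)

/-- The Fourier coefficient `f̂(S)`, equal to `0` when `S ∉ H_{n,min{k,n-k}}`. -/
noncomputable def fourierSlice (n k : ℕ) (f : Slice n k → ℝ) (S : Finset ℕ) : ℝ :=
  if IsH n (min k (n - k)) S then
    (∑ x, f x * basisVec n k S x) / Real.sqrt (∑ x, basisVec n k S x ^ 2)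
  else 0

/-- The Hamming weight of `z ∈ {0,1}^t`. -/
def wt {t : ℕ} (z : Fin t → Bool) : ℕ :=
  (Finset.univ.filter fun i => z i = true).card

/-- The concatenation `x ∘ z ∈ {0,1}^n` of `x ∈ {0,1}^{n-t}` with `z ∈ {0,1}^t`
(with `z` occupying the last `t` coordinates). -/
def catFun (n t : ℕ) (x : Fin (n - t) → Bool) (z : Fin t → Bool) : Fin n → Bool :=
  fun i =>
    if h : (i : ℕ) < n - t then x ⟨i, h⟩
    else if h2 : (i : ℕ) - (n - t) < t then z ⟨(i : ℕ) - (n - t), h2⟩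
    else false

/-- The restriction `f_z : C([n-t], k-|z|) → ℝ`, `f_z(x) = f(x ∘ z)`; it is
(the everywhere-zero function on) the empty function when `|z| > k`. -/
noncomputable def restrict (n k t : ℕ) (f : Slice n k → ℝ) (z : Fin t → Bool) :
    Slice (n - t) (k - wt z) → ℝ :=
  fun x =>
    if h : (Finset.univ.filter fun i => catFun n t x.1 z i = true).card = k then
      f ⟨catFun n t x.1 z, h⟩
    else 0

/-- The Fourier coefficient `f̂_z(S)` of the restriction `f_z`. -/
noncomputable def fourierSliceRestrict (n k t : ℕ) (f : Slice n k → ℝ) (z : Fin t → Bool)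
    (S : Finset ℕ) : ℝ :=
  fourierSlice (n - t) (k - wt z) (restrict n k t f z) S

/-- The adjacency matrix `A_{n,k}` of the Johnson graph. -/
noncomputable def johnsonAdj (n k : ℕ) : Matrix (Slice n k) (Slice n k) ℝ :=
  Matrix.of fun x y =>
    if (Finset.univ.filter fun i => x.1 i ≠ y.1 i).card = 2 then (1 : ℝ) else 0

/-! ### The Boolean cube and its last coordinate -/

/-- The Hamming weight of a point of the cube. -/
def hw {n : ℕ} (x : Fin n → Bool) : ℕ := (Finset.univ.filter fun i => x i = true).card

/-- The coordinatewise order on the cube. -/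
def below {n : ℕ} (y x : Fin n → Bool) : Prop := ∀ i, y i = true → x i = true

/-- The point `x ∘ b` of the cube: `x` with a last coordinate `b` appended. -/
def app {n : ℕ} (x : Fin n → Bool) (b : Bool) : Fin (n + 1) → Bool :=
  Fin.snoc (α := fun _ => Bool) x b

@[simp] lemma app_last {n : ℕ} (x : Fin n → Bool) (b : Bool) : app x b (Fin.last n) = b := by
  simp [app]

@[simp] lemma app_castSucc {n : ℕ} (x : Fin n → Bool) (b : Bool) (i : Fin n) :
    app x b i.castSucc = x i := by
  simp [app]

@[simp] lemma hw_app_false {n : ℕ} (x : Fin n → Bool) : hw (app x false) = hw x := by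
  simpa [hw] using (wcast_false (app x false) (by simp)).symm

@[simp] lemma hw_app_true {n : ℕ} (x : Fin n → Bool) : hw (app x true) = hw x + 1 := by
  simpa [hw] using (wcast_true (app x true) (by simp)).symm

lemma below_app {n : ℕ} (x y : Fin n → Bool) (a b : Bool) :
    below (app y b) (app x a) ↔ below y x ∧ (b = true → a = true) := by
  simp [below, Fin.forall_fin_succ']

lemma app_surj {n : ℕ} (x : Fin (n + 1) → Bool) :
    ∃ (y : Fin n → Bool) (b : Bool), x = app y b :=
  ⟨fun i => x i.castSucc, x (Fin.last n), by
    funext i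
    refine Fin.lastCases ?_ (fun j => ?_) i <;> simp⟩

lemma sum_app {n : ℕ} (F : (Fin (n + 1) → Bool) → ℝ) :
    ∑ x, F x = ∑ x, F (app x false) + ∑ x, F (app x true) := by
  rw [← (Fin.snocEquiv (fun _ : Fin (n + 1) => Bool)).sum_comp F, Fintype.sum_prod_type]
  simp only [Fintype.sum_bool]
  rw [add_comm]
  rfl

lemma eq_of_below {n : ℕ} (x y : Fin n → Bool) : (hw y = hw x ∧ below y x) ↔ y = x := by
  constructor
  · rintro ⟨h1, h2⟩
    have hsub : (Finset.univ.filter fun i => y i = true) ⊆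
        (Finset.univ.filter fun i => x i = true) := by
      intro i hi
      simp only [Finset.mem_filter, Finset.mem_univ, true_and] at hi ⊢
      exact h2 i hi
    have h3 := Finset.eq_of_subset_of_card_le hsub (le_of_eq h1.symm)
    funext i
    have h4 := Finset.ext_iff.1 h3 i
    simp only [Finset.mem_filter, Finset.mem_univ, true_and] at h4
    exact Bool.eq_iff_iff.2 h4
  · rintro rfl
    exact ⟨rfl, fun _ h => h⟩

/-! ### Up and down operators on the whole cube -/

/-- The up operator on functions on the cube; it acts as `P↑` on each slice. -/
noncomputable def up {n : ℕ} (g : (Fin n → Bool) → ℝ) (x : Fin n → Bool) : ℝ :=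
  ∑ y, if hw y + 1 = hw x ∧ below y x then g y else 0

/-- The down operator on functions on the cube, the adjoint of `up`. -/
noncomputable def dn {n : ℕ} (g : (Fin n → Bool) → ℝ) (y : Fin n → Bool) : ℝ :=
  ∑ x, if hw y + 1 = hw x ∧ below y x then g x else 0

lemma up_app_false {n : ℕ} (g : (Fin (n + 1) → Bool) → ℝ) (x : Fin n → Bool) :
    up g (app x false) = up (fun y => g (app y false)) x := by
  simp [up, sum_app, below_app]

lemma up_app_true {n : ℕ} (g : (Fin (n + 1) → Bool) → ℝ) (x : Fin n → Bool) :
    up g (app x true) = up (fun y => g (app y true)) x + g (app x false) := by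
  simp [up, sum_app, below_app, eq_of_below]
  ring

lemma dn_app_false {n : ℕ} (g : (Fin (n + 1) → Bool) → ℝ) (x : Fin n → Bool) :
    dn g (app x false) = dn (fun y => g (app y false)) x + g (app x true) := by
  have h : ∀ y : Fin n → Bool, (hw x = hw y ∧ below x y) ↔ y = x := fun y =>
    (eq_of_below y x).trans eq_comm
  simp [dn, sum_app, below_app, h]

lemma dn_app_true {n : ℕ} (g : (Fin (n + 1) → Bool) → ℝ) (x : Fin n → Bool) :
    dn g (app x true) = dn (fun y => g (app y true)) x := by
  simp [dn, sum_app, below_app]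

lemma up_add {n : ℕ} (g h : (Fin n → Bool) → ℝ) (x : Fin n → Bool) :
    up (fun y => g y + h y) x = up g x + up h x := by
  simp only [up, ← Finset.sum_add_distrib]
  refine Finset.sum_congr rfl fun y _ => ?_
  split_ifs <;> simp

lemma up_smul {n : ℕ} (c : ℝ) (g : (Fin n → Bool) → ℝ) (x : Fin n → Bool) :
    up (fun y => c * g y) x = c * up g x := by
  simp [up, Finset.mul_sum]

lemma dn_add {n : ℕ} (g h : (Fin n → Bool) → ℝ) (x : Fin n → Bool) :
    dn (fun y => g y + h y) x = dn g x + dn h x := by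
  simp only [dn, ← Finset.sum_add_distrib]
  refine Finset.sum_congr rfl fun y _ => ?_
  split_ifs <;> simp

lemma dn_smul {n : ℕ} (c : ℝ) (g : (Fin n → Bool) → ℝ) (x : Fin n → Bool) :
    dn (fun y => c * g y) x = c * dn g x := by
  simp [dn, Finset.mul_sum]

lemma up_zero {n : ℕ} (x : Fin n → Bool) : up (fun _ => 0) x = 0 := by simp [up]

lemma dn_zero {n : ℕ} (x : Fin n → Bool) : dn (fun _ => 0) x = 0 := by simp [dn]

lemma sum_up_mul {n : ℕ} (g h : (Fin n → Bool) → ℝ) :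
    ∑ x, up g x * h x = ∑ x, g x * dn h x := by
  simp only [up, dn, Finset.sum_mul, Finset.mul_sum]
  rw [Finset.sum_comm]
  refine Finset.sum_congr rfl fun y _ => Finset.sum_congr rfl fun x _ => ?_
  split_ifs <;> simp

/-- The commutation relation `P↓ P↑ - P↑ P↓ = n - 2k` on the slice of weight `k`. -/
lemma dn_up {n : ℕ} (g : (Fin n → Bool) → ℝ) (x : Fin n → Bool) :
    dn (up g) x = up (dn g) x + ((n : ℝ) - 2 * hw x) * g x := by
  induction n with
  | zero => simp [up, dn, hw, Subsingleton.elim _ x]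
  | succ n ih =>
    obtain ⟨x, b, rfl⟩ := app_surj x
    cases b
    · rw [dn_app_false, up_app_false]
      simp only [up_app_false, up_app_true, dn_app_false]
      have h1 := ih (fun y => g (app y false)) x
      have h2 := up_add (dn fun y => g (app y false)) (fun y => g (app y true)) x
      simp only [hw_app_false]
      push_cast
      linarith
    · rw [dn_app_true, up_app_true]
      simp only [up_app_true, dn_app_false, dn_app_true]
      have h1 := ih (fun y => g (app y true)) x
      have h2 := dn_add (up fun y => g (app y true)) (fun y => g (app y false)) x
      have h3 : up (fun y => dn g (app y true)) x = up (dn fun y => g (app y true)) x := by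
        simp only [dn_app_true]
      simp only [hw_app_true]
      push_cast
      linarith

/-- `g` vanishes off the slice of weight `s`. -/
def Supp {n : ℕ} (s : ℕ) (g : (Fin n → Bool) → ℝ) : Prop := ∀ x, hw x ≠ s → g x = 0

lemma Supp.up_succ {n s : ℕ} {g : (Fin n → Bool) → ℝ} (hg : Supp s g) : Supp (s + 1) (up g) := by
  intro x hx
  refine Finset.sum_eq_zero fun y _ => ?_
  split_ifs with h
  · exact hg y (by omega)
  · rfl

lemma Supp.iter {n s : ℕ} {g : (Fin n → Bool) → ℝ} (hg : Supp s g) (d : ℕ) :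
    Supp (s + d) (up^[d] g) := by
  induction d with
  | zero => exact hg
  | succ d ih =>
    rw [Function.iterate_succ_apply']
    exact ih.up_succ

/-- Telescoping the commutation relation from a harmonic vector `g` (one with `P↓ g = 0`). -/
lemma dn_iter {n s : ℕ} {g : (Fin n → Bool) → ℝ} (hg : Supp s g) (h0 : dn g = fun _ => 0)
    (d : ℕ) (x : Fin n → Bool) :
    dn (up^[d + 1] g) x = ((d : ℝ) + 1) * ((n : ℝ) - 2 * s - d) * up^[d] g x := by
  induction d generalizing x with
  | zero =>
    simp only [zero_add, Function.iterate_one, Function.iterate_zero, id_eq]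
    rw [dn_up, h0, up_zero]
    by_cases hx : hw x = s
    · rw [hx]; push_cast; ring
    · rw [hg x hx]; ring
  | succ d ih =>
    rw [Function.iterate_succ_apply', dn_up, funext ih, up_smul, ← Function.iterate_succ_apply' up]
    by_cases hx : hw x = s + (d + 1)
    · rw [hx]; push_cast; ring
    · rw [hg.iter (d + 1) x hx]; ring

/-- The squared norm of a function on the cube. -/
noncomputable def nsq {n : ℕ} (g : (Fin n → Bool) → ℝ) : ℝ := ∑ x, g x ^ 2

lemma nsq_iter {n s : ℕ} {g : (Fin n → Bool) → ℝ} (hg : Supp s g) (h0 : dn g = fun _ => 0)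
    (d : ℕ) :
    nsq (up^[d + 1] g) = ((d : ℝ) + 1) * ((n : ℝ) - 2 * s - d) * nsq (up^[d] g) := by
  have h := sum_up_mul (up^[d] g) (up^[d + 1] g)
  simp only [dn_iter hg h0] at h
  rw [← Function.iterate_succ_apply' up] at h
  simp only [nsq, pow_two, Finset.mul_sum]
  rw [h]
  exact Finset.sum_congr rfl fun x _ => by ring

/-! ### The vectors `χ` on the cube -/

/-- The extension by zero of `χ_{n,S}` to the cube, by the same recursion as `chi`. -/
noncomputable def chiC : (n : ℕ) → (S : Finset ℕ) → (Fin n → Bool) → ℝ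
  | 0, S => fun _ => if S = ∅ then 1 else 0
  | n + 1, S => fun x =>
    if n + 1 ∈ S then
      if x (Fin.last n) = true then chiC n (S.erase (n + 1)) fun i => x i.castSucc
      else -(up (chiC n (S.erase (n + 1))) fun i => x i.castSucc) / ((n : ℝ) + 1 - 2 * S.card + 1)
    else
      if x (Fin.last n) = true then 0 else chiC n S fun i => x i.castSucc

lemma chiC_false_mem {n : ℕ} {S : Finset ℕ} (h : n + 1 ∈ S) (x : Fin n → Bool) :
    chiC (n + 1) S (app x false) =
      -(up (chiC n (S.erase (n + 1))) x) / ((n : ℝ) + 1 - 2 * S.card + 1) := by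
  simp [chiC, h]

lemma chiC_true_mem {n : ℕ} {S : Finset ℕ} (h : n + 1 ∈ S) (x : Fin n → Bool) :
    chiC (n + 1) S (app x true) = chiC n (S.erase (n + 1)) x := by
  simp [chiC, h]

lemma chiC_false_nmem {n : ℕ} {S : Finset ℕ} (h : n + 1 ∉ S) (x : Fin n → Bool) :
    chiC (n + 1) S (app x false) = chiC n S x := by
  simp [chiC, h]

lemma chiC_true_nmem {n : ℕ} {S : Finset ℕ} (h : n + 1 ∉ S) (x : Fin n → Bool) :
    chiC (n + 1) S (app x true) = 0 := by
  simp [chiC, h]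

lemma chiC_supp (n : ℕ) (S : Finset ℕ) : Supp S.card (chiC n S) := by
  induction n generalizing S with
  | zero =>
    intro x hx
    have : S ≠ ∅ := by
      rintro rfl
      exact hx (by simp [hw])
    simp [chiC, this]
  | succ n ih =>
    intro x hx
    obtain ⟨x, b, rfl⟩ := app_surj x
    by_cases h : n + 1 ∈ S
    · have hc := Finset.card_erase_add_one h
      cases b
      · rw [hw_app_false] at hx
        rw [chiC_false_mem h, (ih _).up_succ x (by omega)]
        simp
      · rw [hw_app_true] at hx
        rw [chiC_true_mem h, ih _ x (by omega)]
    · cases b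
      · rw [hw_app_false] at hx
        rw [chiC_false_nmem h, ih _ x hx]
      · rw [chiC_true_nmem h]

/-- A sum over a slice of the values of a function on the cube. -/
lemma sum_slice {n k : ℕ} (F : (Fin n → Bool) → ℝ) :
    ∑ x : Slice n k, F x.1 = ∑ x, if hw x = k then F x else 0 := by
  rw [← Finset.sum_filter]
  exact (Finset.sum_subtype _ (by intro x; rw [Finset.mem_filter]; simp [hw]) F).symm

lemma sum_slice_up {n k : ℕ} (g : (Fin n → Bool) → ℝ) (x : Fin n → Bool) (hx : hw x = k + 1) :
    (∑ y : Slice n k, (if ∀ i, y.1 i = true → x i = true then (1 : ℝ) else 0) * g y.1) = up g x := by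
  rw [sum_slice fun y => (if ∀ i, y i = true → x i = true then (1 : ℝ) else 0) * g y]
  refine Finset.sum_congr rfl fun y _ => ?_
  rw [hx]
  by_cases h1 : hw y = k <;> by_cases h2 : ∀ i, y i = true → x i = true <;> simp [h1, h2, below]

lemma chi_eq (n : ℕ) (S : Finset ℕ) (x : Slice n S.card) : chi n S x = chiC n S x.1 := by
  induction n generalizing S with
  | zero =>
    have : S = ∅ := by
      rw [← Finset.card_eq_zero, ← x.2]
      simp
    simp [chi, chiC, this]
  | succ n ih =>
    unfold chi chiC
    by_cases h : n + 1 ∈ S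
    · by_cases hx : x.1 (Fin.last n) = true
      · simp only [h, hx, dite_true, if_true]
        rw [ih]
        rfl
      · rw [dif_pos h, if_pos h, dif_neg hx, if_neg hx]
        simp only [ih]
        rw [sum_slice_up]
        · rfl
        · rw [Finset.card_erase_add_one h]
          exact (dropLast x hx).2
    · by_cases hx : x.1 (Fin.last n) = true
      · simp [h, hx]
      · rw [dif_neg h, if_neg h, dif_neg hx, if_neg hx, ih]
        rfl

lemma upPathAux_mulVec {n i : ℕ} (g : (Fin n → Bool) → ℝ) (d : ℕ) (x : Slice n (i + d)) :
    ((upPathAux n i d).mulVec fun y => g y.1) x = up^[d] g x.1 := by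
  induction d with
  | zero =>
    change ((1 : Matrix (Slice n i) (Slice n i) ℝ).mulVec fun y => g y.1) x = _
    rw [Matrix.one_mulVec]
    rfl
  | succ d ih =>
    rw [upPathAux, ← Matrix.mulVec_mulVec, funext ih, Function.iterate_succ_apply']
    exact sum_slice_up _ _ x.2

lemma upPath_add (n i d : ℕ) : upPath n i (i + d) = upPathAux n i d := by
  have key : ∀ e (h : e = d) (h' : Matrix (Slice n (i + e)) (Slice n i) ℝ =
      Matrix (Slice n (i + d)) (Slice n i) ℝ),
      cast h' (upPathAux n i e) = upPathAux n i d := by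
    rintro e rfl _
    rfl
  rw [upPath, dif_pos (Nat.le_add_right i d)]
  exact key _ (by omega) _

lemma basisVec_eq {n k : ℕ} {S : Finset ℕ} (h : S.card ≤ k) (x : Slice n k) :
    basisVec n k S x = up^[k - S.card] (chiC n S) x.1 := by
  obtain ⟨d, rfl⟩ := Nat.exists_eq_add_of_le h
  rw [basisVec, upPath_add, funext (chi_eq n S), upPathAux_mulVec, Nat.add_sub_cancel_left]

lemma fourier_eq {n k : ℕ} {S : Finset ℕ} (hS : IsH n (min k (n - k)) S) (f : Slice n k → ℝ)
    (F : (Fin n → Bool) → ℝ) (hF : ∀ x, f x = F x.1) :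
    fourierSlice n k f S = (∑ x, F x * up^[k - S.card] (chiC n S) x) /
      Real.sqrt (nsq (up^[k - S.card] (chiC n S))) := by
  have hk : S.card ≤ k := hS.2.1.trans (min_le_left _ _)
  have hs := (chiC_supp n S).iter (k - S.card)
  rw [Nat.add_sub_cancel' hk] at hs
  rw [fourierSlice, if_pos hS]
  simp only [basisVec_eq hk, hF]
  rw [sum_slice (k := k) fun x => F x * up^[k - S.card] (chiC n S) x,
    sum_slice (k := k) fun x => up^[k - S.card] (chiC n S) x ^ 2, nsq]
  refine congrArg₂ (fun a b => a / Real.sqrt b) ?_ ?_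
  · refine Finset.sum_congr rfl fun x _ => ?_
    split_ifs with h
    · rfl
    · rw [hs x h, mul_zero]
  · refine Finset.sum_congr rfl fun x _ => ?_
    split_ifs with h
    · rfl
    · rw [hs x h]; simp

/-! ### The ballot condition and harmonicity of `χ` -/

/-- The ballot condition `s_j ≥ 2j`, phrased without an enumeration of `S`: this form passes to
subsets of `S`. -/
def Ballot (S : Finset ℕ) : Prop := ∀ m ∈ S, 2 * (S.filter (· ≤ m)).card ≤ m

lemma IsH.ballot {n k : ℕ} {S : Finset ℕ} (h : IsH n k S) : Ballot S := by
  intro m hm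
  set c := (S.filter (· ≤ m)).card with hc
  have hpos : 0 < c := Finset.card_pos.2 ⟨m, by simp [hm]⟩
  have hle : c ≤ S.card := Finset.card_filter_le _ _
  have hj : c - 1 < S.card := by omega
  have h1 := h.2.2 (c - 1) hj
  set e := S.orderEmbOfFin rfl with he
  have h2 : (S.sort (· ≤ ·)).getD (c - 1) 0 = e ⟨c - 1, hj⟩ := by
    rw [he, Finset.orderEmbOfFin_apply, List.getD_eq_getElem]
    rfl
  rw [h2] at h1
  have h3 : e ⟨c - 1, hj⟩ ≤ m := by
    by_contra hlt
    -- otherwise all elements of `S` up to `m` sit among its first `c - 1` elements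
    have hsub : S.filter (· ≤ m) ⊆ (Finset.Iio (⟨c - 1, hj⟩ : Fin S.card)).map e.toEmbedding := by
      intro y hy
      rw [Finset.mem_filter] at hy
      have : y ∈ Set.range e := by
        rw [he, Finset.range_orderEmbOfFin]; exact hy.1
      obtain ⟨i, rfl⟩ := this
      rw [Finset.mem_map]
      refine ⟨i, Finset.mem_Iio.2 ?_, rfl⟩
      rw [← e.lt_iff_lt]
      omega
    have h4 := Finset.card_le_card hsub
    rw [Finset.card_map, Fin.card_Iio, ← hc] at h4
    simp only at h4
    omega
  omega

lemma Ballot.erase {S : Finset ℕ} (h : Ballot S) (a : ℕ) : Ballot (S.erase a) := by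
  intro m hm
  have h1 := h m (Finset.mem_of_mem_erase hm)
  have h2 := Finset.card_le_card (Finset.filter_subset_filter (· ≤ m) (Finset.erase_subset a S))
  omega

lemma Ballot.card_le {S : Finset ℕ} (h : Ballot S) {n : ℕ} (hS : S ⊆ Finset.Icc 1 n) :
    2 * S.card ≤ n := by
  rcases S.eq_empty_or_nonempty with rfl | hne
  · simp
  · have h1 := h _ (S.max'_mem hne)
    rw [Finset.filter_true_of_mem fun x hx => S.le_max' x hx] at h1
    exact h1.trans (Finset.mem_Icc.1 (hS (S.max'_mem hne))).2

/-- `χ_{n,S}` lies in the kernel of the down operator. The denominator in the recursion for `χ`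
is the eigenvalue of `P↓ P↑` on `χ_{n-1,S∖{n}}`; the ballot condition makes it nonzero. -/
lemma dn_chiC (n : ℕ) (S : Finset ℕ) (hS : S ⊆ Finset.Icc 1 n) (hb : Ballot S) :
    dn (chiC n S) = fun _ => 0 := by
  induction n generalizing S with
  | zero =>
    funext x
    simp [dn, hw]
  | succ n ih =>
    funext x
    obtain ⟨x, b, rfl⟩ := app_surj x
    by_cases h : n + 1 ∈ S
    · have hsub : S.erase (n + 1) ⊆ Finset.Icc 1 n := by
        intro y hy
        have h1 := Finset.mem_Icc.1 (hS (Finset.mem_of_mem_erase hy))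
        have h2 := Finset.ne_of_mem_erase hy
        exact Finset.mem_Icc.2 (by omega)
      have h0 := ih _ hsub (hb.erase _)
      cases b
      · rw [dn_app_false, chiC_true_mem h]
        simp only [chiC_false_mem h]
        have hc : ((S.erase (n + 1)).card : ℝ) = S.card - 1 := by
          rw [← Finset.card_erase_add_one h]; push_cast; ring
        have hne : ((n : ℝ) + 1 - 2 * S.card + 1) ≠ 0 := by
          have h1 : ((2 * S.card : ℕ) : ℝ) ≤ ((n + 1 : ℕ) : ℝ) := Nat.cast_le.2 (hb.card_le hS)
          push_cast at h1
          linarith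
        have h1 := dn_iter (chiC_supp n (S.erase (n + 1))) h0 0 x
        simp only [zero_add, Function.iterate_one, Function.iterate_zero, id_eq, hc] at h1
        have h2 := dn_smul (-1 / ((n : ℝ) + 1 - 2 * S.card + 1))
          (up (chiC n (S.erase (n + 1)))) x
        rw [h1] at h2
        have h3 : (fun y => -1 / ((n : ℝ) + 1 - 2 * S.card + 1) *
            up (chiC n (S.erase (n + 1))) y) = fun y =>
              -up (chiC n (S.erase (n + 1))) y / ((n : ℝ) + 1 - 2 * S.card + 1) := by
          funext y; ring
        rw [h3] at h2
        rw [h2]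
        field_simp
        push_cast
        ring
      · rw [dn_app_true]
        simp only [chiC_true_mem h]
        exact congrFun h0 x
    · have hsub : S ⊆ Finset.Icc 1 n := by
        intro y hy
        have h1 := Finset.mem_Icc.1 (hS hy)
        have h2 : y ≠ n + 1 := by rintro rfl; exact h hy
        exact Finset.mem_Icc.2 (by omega)
      have h0 := ih _ hsub hb
      cases b
      · rw [dn_app_false, chiC_true_nmem h]
        simp only [chiC_false_nmem h]
        rw [add_zero]
        exact congrFun h0 x
      · rw [dn_app_true]
        simp only [chiC_true_nmem h]
        exact dn_zero x

/-! ### Splitting off the last coordinate -/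

lemma iter_false {n : ℕ} {S : Finset ℕ} (h : n + 1 ∉ S) (d : ℕ) (x : Fin n → Bool) :
    up^[d] (chiC (n + 1) S) (app x false) = up^[d] (chiC n S) x := by
  induction d generalizing x with
  | zero => exact chiC_false_nmem h x
  | succ d ih =>
    rw [Function.iterate_succ_apply', up_app_false, funext ih, Function.iterate_succ_apply']

lemma iter_true {n : ℕ} {S : Finset ℕ} (h : n + 1 ∉ S) (d : ℕ) (x : Fin n → Bool) :
    up^[d + 1] (chiC (n + 1) S) (app x true) = ((d : ℝ) + 1) * up^[d] (chiC n S) x := by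
  induction d generalizing x with
  | zero =>
    simp only [zero_add, Function.iterate_one, Function.iterate_zero, id_eq]
    rw [up_app_true]
    simp only [chiC_true_nmem h, up_zero, chiC_false_nmem h]
    simp
  | succ d ih =>
    rw [Function.iterate_succ_apply', up_app_true, funext ih, iter_false h, up_smul,
      ← Function.iterate_succ_apply' up]
    push_cast
    ring

lemma catFun_one {n : ℕ} (x : Fin n → Bool) (b : Bool) :
    catFun (n + 1) 1 x (fun _ => b) = app x b := by
  funext i
  refine Fin.lastCases ?_ (fun j => ?_) i <;> simp [catFun]

/-- The extension by zero of a function on a slice to the cube. -/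
noncomputable def ext0 {n k : ℕ} (f : Slice n k → ℝ) (x : Fin n → Bool) : ℝ :=
  if h : (Finset.univ.filter fun i => x i = true).card = k then f ⟨x, h⟩ else 0

lemma ext0_coe {n k : ℕ} (f : Slice n k → ℝ) (x : Slice n k) : f x = ext0 f x.1 := by
  rw [ext0, dif_pos x.2]

lemma restrict_eq {n k : ℕ} (f : Slice (n + 1) k → ℝ) (b : Bool)
    (x : Slice n (k - wt (fun _ : Fin 1 => b))) :
    restrict (n + 1) k 1 f (fun _ => b) x = ext0 f (app x.1 b) := by
  have h := catFun_one x.1 b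
  unfold restrict ext0
  rw [← h]

lemma fourier_restrict {n k l : ℕ} {S : Finset ℕ} (f : Slice (n + 1) k → ℝ) (b : Bool)
    (hl : k - wt (fun _ : Fin 1 => b) = l) (hS : IsH n (min l (n - l)) S) :
    fourierSliceRestrict (n + 1) k 1 f (fun _ => b) S =
      (∑ x, ext0 f (app x b) * up^[l - S.card] (chiC n S) x) /
      Real.sqrt (nsq (up^[l - S.card] (chiC n S))) := by
  subst hl
  exact fourier_eq hS _ (fun x => ext0 f (app x b)) (restrict_eq f b)

/-- For `S ∈ H_{n-1,min{k,n-k}}`: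
`f̂(S) = (1/√(n-2|S|))(√(n-k-|S|)·f̂₀(S) + √(k-|S|)·f̂₁(S))`. -/
theorem stmt12 (n k : ℕ) (hn : 1 ≤ n) (hk : k ≤ n) (f : Slice n k → ℝ)
    (S : Finset ℕ) (hS : IsH (n - 1) (min k (n - k)) S) :
    fourierSlice n k f S
      = (1 / Real.sqrt ((n : ℝ) - 2 * S.card)) *
          (Real.sqrt ((n : ℝ) - k - S.card) *
              fourierSliceRestrict n k 1 f (fun _ => false) S
            + Real.sqrt ((k : ℝ) - S.card) *
                fourierSliceRestrict n k 1 f (fun _ => true) S) := by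
  obtain ⟨m, rfl⟩ : ∃ m, n = m + 1 := ⟨n - 1, by omega⟩
  rw [Nat.add_sub_cancel] at hS
  have hb := hS.ballot
  obtain ⟨hsub, hcard, hlist⟩ := hS
  have hsk : S.card ≤ k := hcard.trans (min_le_left _ _)
  have hsk' : S.card ≤ m + 1 - k := hcard.trans (min_le_right _ _)
  have h2s : 2 * S.card ≤ m := hb.card_le hsub
  have hnm : m + 1 ∉ S := fun h => by
    have := Finset.mem_Icc.1 (hsub h)
    omega
  have hsupp := chiC_supp m S
  have hdn := dn_chiC m S hsub hb
  have hsub' : S ⊆ Finset.Icc 1 (m + 1) :=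
    hsub.trans (Finset.Icc_subset_Icc_right (Nat.le_succ m))
  have hL := fourier_eq (n := m + 1) (k := k) ⟨hsub', hcard, hlist⟩ f (ext0 f) (ext0_coe f)
  have hp : (0 : ℝ) < ((m + 1 : ℕ) : ℝ) - 2 * S.card := by
    have : ((2 * S.card : ℕ) : ℝ) ≤ (m : ℝ) := Nat.cast_le.2 h2s
    push_cast at this ⊢
    linarith
  have hF : S.card + k ≤ m → fourierSliceRestrict (m + 1) k 1 f (fun _ => false) S =
      (∑ x, ext0 f (app x false) * up^[k - S.card] (chiC m S) x) /
        Real.sqrt (nsq (up^[k - S.card] (chiC m S))) := fun hlt =>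
    fourier_restrict f false (by simp [wt]) ⟨hsub, le_min hsk (by omega), hlist⟩
  rw [hL]
  have hsum := sum_app fun x => ext0 f x * up^[k - S.card] (chiC (m + 1) S) x
  have hnsq : nsq (up^[k - S.card] (chiC (m + 1) S)) = _ :=
    sum_app fun x => up^[k - S.card] (chiC (m + 1) S) x ^ 2
  simp only [iter_false hnm] at hsum hnsq
  obtain ⟨d, rfl⟩ := Nat.exists_eq_add_of_le hsk
  rw [Nat.add_sub_cancel_left] at *
  cases d with
  | zero =>
    simp only [Function.iterate_zero, id_eq, chiC_true_nmem hnm, add_zero] at *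
    simp only [mul_zero, ne_eq, OfNat.ofNat_ne_zero, not_false_eq_true, zero_pow,
      Finset.sum_const_zero, add_zero] at hsum hnsq
    rw [hsum, hnsq, hF (by omega), sub_self, Real.sqrt_zero, zero_mul,
      add_zero (Real.sqrt _ * _),
      show ((m + 1 : ℕ) : ℝ) - S.card - S.card = ((m + 1 : ℕ) : ℝ) - 2 * S.card by ring]
    have := Real.sqrt_pos.2 hp
    rw [← mul_assoc, one_div, inv_mul_cancel₀ this.ne', one_mul]
    rfl
  | succ d =>
    have hT := fourier_restrict (n := m) (l := S.card + d) f true (by simp [wt])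
      ⟨hsub, le_min (by omega) (by omega), hlist⟩
    rw [Nat.add_sub_cancel_left] at hT
    simp only [iter_true hnm] at hsum hnsq
    have hN := nsq_iter hsupp hdn d
    set A := ∑ x, ext0 f (app x false) * up^[d + 1] (chiC m S) x with hA
    set B := ∑ x, ext0 f (app x true) * up^[d] (chiC m S) x with hB
    set N := nsq (up^[d] (chiC m S)) with hNdef
    have hB' : ∑ x, ext0 f (app x true) * (((d : ℝ) + 1) * up^[d] (chiC m S) x) =
        ((d : ℝ) + 1) * B := by
      rw [hB, Finset.mul_sum]
      exact Finset.sum_congr rfl fun x _ => by ring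
    have hN' : ∑ x, (((d : ℝ) + 1) * up^[d] (chiC m S) x) ^ 2 = ((d : ℝ) + 1) ^ 2 * N := by
      rw [hNdef, nsq, Finset.mul_sum]
      exact Finset.sum_congr rfl fun x _ => by ring
    have hN0 : 0 ≤ N := Finset.sum_nonneg fun x _ => sq_nonneg _
    set p : ℝ := ((m + 1 : ℕ) : ℝ) - 2 * S.card with hpdef
    set q : ℝ := ((m + 1 : ℕ) : ℝ) - (S.card + (d + 1) : ℕ) - S.card with hqdef
    have hq : (m : ℝ) - 2 * S.card - d = q := by rw [hqdef]; push_cast; ring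
    have hr : ((S.card + (d + 1) : ℕ) : ℝ) - S.card = (d : ℝ) + 1 := by push_cast; ring
    rw [hq] at hN
    have htot : nsq (up^[d + 1] (chiC (m + 1) S)) = ((d : ℝ) + 1) * p * N := by
      rw [hnsq, hN']
      change nsq (up^[d + 1] (chiC m S)) + _ = _
      rw [hN, hpdef, ← hq]
      push_cast
      ring
    rw [hsum, hB', htot, hT, hr]
    have hd : (0 : ℝ) < (d : ℝ) + 1 := by positivity
    have hds := Real.mul_self_sqrt hd.le
    have hsd := Real.sqrt_pos.2 hd
    have hsp := Real.sqrt_pos.2 hp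
    rw [Real.sqrt_mul (by positivity), Real.sqrt_mul hd.le]
    rcases eq_or_lt_of_le hN0 with hz | hNpos
    · -- `N = 0`: the other two squared norms are multiples of `N`, so each quotient is `_ / 0 = 0`
      have hF0 : Real.sqrt q * fourierSliceRestrict (m + 1) (S.card + (d + 1)) 1 f
          (fun _ => false) S = 0 := by
        by_cases hlt : S.card + (S.card + (d + 1)) ≤ m
        · rw [hF hlt, hN, ← hz]; simp
        · have : q ≤ 0 := by
            have h1 : ((m + 1 : ℕ) : ℝ) ≤ ((S.card + (S.card + (d + 1)) : ℕ) : ℝ) :=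
              Nat.cast_le.2 (by omega)
            rw [hqdef]; push_cast at h1 ⊢; linarith
          rw [Real.sqrt_eq_zero_of_nonpos this, zero_mul]
      rw [hF0, ← hz]
      simp
    · have hsN := Real.sqrt_pos.2 hNpos
      by_cases hlt : S.card + (S.card + (d + 1)) ≤ m
      · have hqpos : 0 < q := by
          have h1 : ((S.card + (S.card + (d + 1)) : ℕ) : ℝ) ≤ (m : ℝ) := Nat.cast_le.2 hlt
          rw [hqdef]; push_cast at h1 ⊢; linarith
        have hsq := Real.sqrt_pos.2 hqpos
        rw [hF hlt, hN, Real.sqrt_mul (by positivity), Real.sqrt_mul hd.le]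
        field_simp
        rw [pow_two, hds]
        ring
      · -- here `n - k = |S|`, so the norm recursion makes the vector paired with `f₀` zero
        have hq0 : q = 0 := by
          have h1 : m + 1 = S.card + (S.card + (d + 1)) := by omega
          have h2 : ((m + 1 : ℕ) : ℝ) = ((S.card + (S.card + (d + 1)) : ℕ) : ℝ) := by rw [h1]
          rw [hqdef, h2]; push_cast; ring
        rw [hq0, mul_zero, zero_mul] at hN
        have hA0 : A = 0 := by
          refine Finset.sum_eq_zero fun x _ => ?_
          have h1 := (Finset.sum_eq_zero_iff_of_nonneg fun x _ => sq_nonneg _).1 hN x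
            (Finset.mem_univ x)
          rw [pow_eq_zero_iff two_ne_zero] at h1
          rw [h1, mul_zero]
        rw [hA0, hq0, Real.sqrt_zero, zero_mul, zero_add, zero_add]
        field_simp
        rw [pow_two, hds]
        ring
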